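/- arXiv:1407.0249 — 3 statements merged into one kernel-verified Lean document; each statement's English description precedes it below -/
import Mathlib

section
/- Let d ≥ 1, p ≥ 1, let W ⊂ ℝ^d be compact, let β ∈ ℝ, θ ∈ ℝ^p, and let h, z ∈ C¹(ℝ^d, ℝ^p) with h(u) = 0 whenever u ∉ W. Define ρ(u) = exp(β + ⟨θ, z(u)⟩). Then, as an equality of vectors in ℝ^p, ∫_W ⟨θ, div z(u)⟩ h(u) ρ(u) du = −∫_W div h(u) ρ(u) du; equivalently, the p×p matrix S = ∫_W h(u) (div z(u))ᵀ ρ(u) du satisfies S θ = −∫_W div h(u) ρ(u) du. -/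
open MeasureTheory

/-- The divergence of a vector-valued function `h : ℝ^d → ℝ^p`, computed componentwise:
`div h(u) = (div h_1(u), …, div h_p(u))` where `div h_k(u) = Σ_{j=1}^d ∂h_k/∂u_j(u)`. -/
noncomputable def divergVec (d p : ℕ) (h : (Fin d → ℝ) → (Fin p → ℝ)) (u : Fin d → ℝ) :
    Fin p → ℝ :=
  fun k => ∑ j : Fin d, fderiv ℝ (fun v => h v k) u (Pi.single j 1)

/-!
Summing the partial derivatives is differentiating along `𝟙 = (1, …, 1)`, so `div h = ∂_𝟙 h`, and
`⟨θ, div z⟩ ρ = ∂_𝟙 ρ` because `ρ` is the exponential of `β + ⟨θ, z⟩`. The claim is therefore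
integration by parts along `𝟙` on the whole space, without boundary term since `h` has compact
support.
-/

theorem setIntegral_smul_eq_integral_smul_of_support_subset {X R F : Type*} [MeasurableSpace X]
    {μ : Measure X} [NormedAddCommGroup F] [NormedSpace ℝ F] [SMulZeroClass R F] {s : Set X}
    (f : X → R) {g : X → F} (hg : Function.support g ⊆ s) :
    ∫ x in s, f x • g x ∂μ = ∫ x, f x • g x ∂μ :=
  setIntegral_eq_integral_of_forall_compl_eq_zero fun _ hx => by
    rw [Function.notMem_support.1 fun hmem => hx (hg hmem), smul_zero]

section IntegrationByParts

variable {E F G : Type*} [NormedAddCommGroup E] [NormedSpace ℝ E]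
  [NormedAddCommGroup F] [NormedSpace ℝ F] [NormedAddCommGroup G] [NormedSpace ℝ G]

theorem fderiv_exp_const_add_clm_comp_apply {z : E → G} {u : E} (β : ℝ) (θ : StrongDual ℝ G)
    (hz : DifferentiableAt ℝ z u) (v : E) :
    fderiv ℝ (fun w => Real.exp (β + θ (z w))) u v =
      θ (fderiv ℝ z u v) * Real.exp (β + θ (z u)) := by
  have hexp := ((θ.hasFDerivAt.comp u hz.hasFDerivAt).const_add β).exp
  exact (congrArg (· v) hexp.fderiv).trans (mul_comm _ _)

variable [FiniteDimensional ℝ E] [MeasurableSpace E] [BorelSpace E] {μ : Measure E}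
  [μ.IsAddHaarMeasure]

theorem integral_fderiv_smul_eq_neg_of_hasCompactSupport {f : E → ℝ} {g : E → F}
    (hf : ContDiff ℝ 1 f) (hg : ContDiff ℝ 1 g) (hsupp : HasCompactSupport g) (v : E) :
    ∫ u, fderiv ℝ f u v • g u ∂μ = -∫ u, f u • fderiv ℝ g u v ∂μ := by
  have hf' : Continuous fun u => fderiv ℝ f u v :=
    (hf.continuous_fderiv one_ne_zero).clm_apply continuous_const
  have hg' : Continuous fun u => fderiv ℝ g u v :=
    (hg.continuous_fderiv one_ne_zero).clm_apply continuous_const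
  rw [integral_smul_fderiv_eq_neg_fderiv_smul_of_integrable
    ((hf'.smul hg.continuous).integrable_of_hasCompactSupport hsupp.smul_left)
    ((hf.continuous.smul hg').integrable_of_hasCompactSupport
      (hsupp.fderiv_apply ℝ v).smul_left)
    ((hf.continuous.smul hg.continuous).integrable_of_hasCompactSupport hsupp.smul_left)
    (fun u _ => hf.differentiable one_ne_zero u) (fun u _ => hg.differentiable one_ne_zero u),
    neg_neg]

theorem setIntegral_fderiv_smul_eq_neg_of_tsupport_subset {f : E → ℝ} {g : E → F} {s : Set E}
    (hf : ContDiff ℝ 1 f) (hg : ContDiff ℝ 1 g) (hsupp : HasCompactSupport g)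
    (hs : tsupport g ⊆ s) (v : E) :
    ∫ u in s, fderiv ℝ f u v • g u ∂μ = -∫ u in s, f u • fderiv ℝ g u v ∂μ := by
  have hsupp_fderiv : Function.support (fun u => fderiv ℝ g u v) ⊆ s :=
    (subset_tsupport _).trans ((tsupport_fderiv_apply_subset ℝ v).trans hs)
  rw [setIntegral_smul_eq_integral_smul_of_support_subset _ ((subset_tsupport g).trans hs),
    setIntegral_smul_eq_integral_smul_of_support_subset _ hsupp_fderiv,
    integral_fderiv_smul_eq_neg_of_hasCompactSupport hf hg hsupp v]

theorem statement4_general {W : Set E} (hW : IsCompact W) (β : ℝ) (θ : StrongDual ℝ G)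
    {h : E → F} {z : E → G} (hh : ContDiff ℝ 1 h) (hz : ContDiff ℝ 1 z)
    (hsupp : ∀ u, u ∉ W → h u = 0) (v : E) :
    ∫ u in W, (θ (fderiv ℝ z u v) * Real.exp (β + θ (z u))) • h u ∂μ =
      -∫ u in W, Real.exp (β + θ (z u)) • fderiv ℝ h u v ∂μ := by
  have hρ : ContDiff ℝ 1 fun u => Real.exp (β + θ (z u)) := by fun_prop
  have hsub : tsupport h ⊆ W :=
    closure_minimal (Function.support_subset_iff'.2 hsupp) hW.isClosed
  simp_rw [← fderiv_exp_const_add_clm_comp_apply β θ (hz.differentiable one_ne_zero _) v]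
  exact setIntegral_fderiv_smul_eq_neg_of_tsupport_subset hρ hh (.intro hW hsupp) hsub v

end IntegrationByParts

theorem divergVec_eq_fderiv_apply_one {d p : ℕ} {h : (Fin d → ℝ) → (Fin p → ℝ)} {u : Fin d → ℝ}
    (hh : DifferentiableAt ℝ h u) : divergVec d p h u = fderiv ℝ h u 1 := by
  have hone : (1 : Fin d → ℝ) = ∑ j, Pi.single j 1 := (Finset.univ_sum_single 1).symm
  ext k
  simp only [divergVec, fderiv_apply hh, hone, map_sum, Finset.sum_apply,
    ContinuousLinearMap.comp_apply, ContinuousLinearMap.proj_apply]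

theorem statement4 (d p : ℕ) (hd : 1 ≤ d) (hp : 1 ≤ p) (W : Set (Fin d → ℝ))
    (hW : IsCompact W) (β : ℝ) (θ : Fin p → ℝ)
    (h z : (Fin d → ℝ) → (Fin p → ℝ)) (hh : ContDiff ℝ 1 h) (hz : ContDiff ℝ 1 z)
    (hsupp : ∀ u, u ∉ W → h u = 0)
    (ρ : (Fin d → ℝ) → ℝ) (hρ : ∀ u, ρ u = Real.exp (β + ∑ k, θ k * z u k)) :
    (∫ u in W, ((∑ k, θ k * divergVec d p z u k) * ρ u) • h u) =
      -∫ u in W, ρ u • divergVec d p h u := by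
  simpa [hρ, divergVec_eq_fderiv_apply_one (hh.differentiable one_ne_zero _),
    divergVec_eq_fderiv_apply_one (hz.differentiable one_ne_zero _)] using
    statement4_general (μ := volume) (z := z) hW β (∑ k, θ k • .proj k) hh hz hsupp 1
end

section
/- Let d ≥ 1, let A ⊂ ℝ^d be convex and compact with the origin in its interior, and W_n = nA. Then there exists a constant C > 0 (depending only on d and A) such that for every n ≥ 1 the number of boundary cubes satisfies #∂I_n ≤ C n^{d−1}. -/
open MeasureTheory Pointwise

/-- The unit cube `C_i = i + (−1/2,1/2]^d` centered at the lattice point `i ∈ ℤ^d`. -/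
def cube (d : ℕ) (i : Fin d → ℤ) : Set (EuclideanSpace ℝ (Fin d)) :=
  {u | ∀ j, u j ∈ Set.Ioc ((i j : ℝ) - 1 / 2) ((i j : ℝ) + 1 / 2)}

/-- `I_n`-type index set: lattice points whose cube is contained in `Wn`. -/
def latticeIn (d : ℕ) (Wn : Set (EuclideanSpace ℝ (Fin d))) : Set (Fin d → ℤ) :=
  {i | cube d i ⊆ Wn}

/-- `∂I_n`-type index set: lattice points not in `latticeIn` whose cube meets `Wn`. -/
def latticeBd (d : ℕ) (Wn : Set (EuclideanSpace ℝ (Fin d))) : Set (Fin d → ℤ) :=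
  {i | i ∉ latticeIn d Wn ∧ (cube d i ∩ Wn).Nonempty}

/-- `W_n^⋆ = ∪_{i ∈ I_n} C_i`. -/
def WnStar (d : ℕ) (Wn : Set (EuclideanSpace ℝ (Fin d))) : Set (EuclideanSpace ℝ (Fin d)) :=
  ⋃ i ∈ latticeIn d Wn, cube d i

/-- `W_{∂I_n} = ∪_{i ∈ ∂I_n} C_i`. -/
def WnBd (d : ℕ) (Wn : Set (EuclideanSpace ℝ (Fin d))) : Set (EuclideanSpace ℝ (Fin d)) :=
  ⋃ i ∈ latticeBd d Wn, cube d i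

/-!
The cubes counted by `latticeBd d W` are disjoint, have volume `1` and diameter at most `√d`, and
each of them meets `frontier W`. Hence their number is at most the volume of the `√d`-neighbourhood
of `frontier W`. For `W = t • A` this volume is `t ^ d` times that of the `√d / t`-neighbourhood of
`frontier A`, so it is enough to show that, for a bounded convex `A`, the `ε`-neighbourhood of the
frontier has volume `O(ε)` for bounded `ε`.

If `A` contains a ball of center `a` and radius `r`, then with `δ = ε / r` the `ε`-neighbourhood of
`frontier A` lies between the dilates of `A` about `a` by the factors `1 - δ` and `1 + δ`, whose
volumes differ by `O(δ)`. If `A` has empty interior, then it lies in the frontier of a half-ball, to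
which the first case applies.
-/

lemma one_add_pow_sub_one_sub_pow_le {δ : ℝ} (hδ : 0 ≤ δ) (hδ1 : δ ≤ 1) (n : ℕ) :
    (1 + δ) ^ n - (1 - δ) ^ n ≤ 2 * δ * n * (1 + δ) ^ (n - 1) := by
  have hsub : |1 + δ - (1 - δ)| = 2 * δ := by
    rw [abs_of_nonneg] <;> linarith
  have hmax : max |1 + δ| |1 - δ| = 1 + δ := by
    rw [abs_of_nonneg (by linarith), abs_of_nonneg (by linarith), max_eq_left (by linarith)]
  calc (1 + δ) ^ n - (1 - δ) ^ n ≤ |(1 + δ) ^ n - (1 - δ) ^ n| := le_abs_self _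
    _ ≤ 2 * δ * n * (1 + δ) ^ (n - 1) := by
      simpa only [hsub, hmax] using abs_pow_sub_pow_le (a := 1 + δ) (b := 1 - δ) (n := n)

section Thickening

open Metric Set AffineMap Bornology Module

lemma inter_frontier_nonempty_of_isPreconnected {X : Type*} [TopologicalSpace X] {s t : Set X}
    (hs : IsPreconnected s) (hst : (s ∩ t).Nonempty) (hst' : ¬s ⊆ t) :
    (s ∩ frontier t).Nonempty := by
  by_contra! h
  have hcover : s ⊆ interior t ∪ interior tᶜ := fun x hx => by
    by_contra hxt
    rw [mem_union, not_or, interior_compl, mem_compl_iff, not_not] at hxt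
    exact h.subset ⟨hx, hxt.2, hxt.1⟩
  obtain ⟨x, hxs, hxt⟩ := hst
  obtain ⟨y, hys, hyt⟩ := not_subset.1 hst'
  have hx : x ∈ interior t :=
    (hcover hxs).resolve_right fun hx => interior_subset hx hxt
  have hy : y ∈ interior tᶜ :=
    (hcover hys).resolve_left fun hy => hyt (interior_subset hy)
  obtain ⟨z, -, hz, hz'⟩ :=
    hs _ _ isOpen_interior isOpen_interior hcover ⟨x, hxs, hx⟩ ⟨y, hys, hy⟩
  exact interior_subset hz' (interior_subset hz)

lemma frontier_smul₀ {G₀ X : Type*} [GroupWithZero G₀] [TopologicalSpace X] [MulAction G₀ X]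
    [ContinuousConstSMul G₀ X] {c : G₀} (hc : c ≠ 0) (s : Set X) :
    frontier (c • s) = c • frontier s := by
  simp only [frontier, closure_smul₀' hc, interior_smul₀ hc, smul_set_sdiff₀ hc]

lemma cthickening_smul₀ {𝕜 E : Type*} [NormedDivisionRing 𝕜] [SeminormedAddCommGroup E]
    [Module 𝕜 E] [NormSMulClass 𝕜 E] {c : 𝕜} (hc : c ≠ 0) (δ : ℝ) (s : Set E) :
    cthickening (‖c‖ * δ) (c • s) = c • cthickening δ s := by
  ext x
  rw [mem_smul_set_iff_inv_smul_mem₀ hc, mem_cthickening_iff, mem_cthickening_iff]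
  nth_rw 1 [← smul_inv_smul₀ hc x]
  rw [infEDist_smul₀ hc, ENNReal.ofReal_mul (norm_nonneg c), ofReal_norm, ENNReal.smul_def,
    smul_eq_mul, ← enorm_eq_nnnorm]
  exact ENNReal.mul_le_mul_iff_right (enorm_ne_zero.2 hc) enorm_ne_top

section TopologicalVectorSpace

variable {E : Type*} [AddCommGroup E] [Module ℝ E] [TopologicalSpace E] [IsTopologicalAddGroup E]
  [ContinuousSMul ℝ E]

lemma image_homothety_interior_subset_image_homothety_closure {s : Set E} {a : E}
    (hs : Convex ℝ s) (ha : a ∈ interior s) {t u : ℝ} (ht : 0 ≤ t) (ht1 : t ≤ 1) (hu : 1 < u) :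
    homothety a t '' interior s ⊆ homothety a u '' closure s := by
  rintro _ ⟨y, hy, rfl⟩
  have hys : homothety a t y ∈ s := by
    rw [homothety_eq_lineMap]
    exact hs.lineMap_mem (interior_subset ha) (interior_subset hy) ⟨ht, ht1⟩
  exact image_mono interior_subset_closure
    (hs.closure_subset_image_homothety_interior_of_one_lt ha u hu (subset_closure hys))

lemma interior_setOf_le_apply {f : E →L[ℝ] ℝ} (hf : f ≠ 0) (c : ℝ) :
    interior {x | c ≤ f x} = {x | c < f x} := by
  change interior (f ⁻¹' Ici c) = f ⁻¹' Ioi c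
  rw [← (f.isOpenMap_of_ne_zero hf).preimage_interior_eq_interior_preimage f.continuous,
    interior_Ici]

end TopologicalVectorSpace

variable {E : Type*} [NormedAddCommGroup E] [NormedSpace ℝ E] {s : Set E} {a : E}

section ProperSpace

variable [ProperSpace E] {r δ : ℝ}

lemma exists_add_smul_eq_of_mem_cthickening {t : Set E} (ht : IsClosed t)
    (hr : 0 ≤ r) (hδ : 0 < δ) {z : E} (hz : z ∈ cthickening (δ * r) t) :
    ∃ x ∈ t, ∃ v : E, ‖v‖ ≤ r ∧ x + δ • v = z := by
  rw [cthickening_eq_biUnion_closedBall _ (by positivity), ht.closure_eq] at hz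
  obtain ⟨x, hx, hzx⟩ := mem_iUnion₂.1 hz
  refine ⟨x, hx, δ⁻¹ • (z - x), ?_, by rw [smul_inv_smul₀ hδ.ne', add_sub_cancel]⟩
  rwa [norm_smul_of_nonneg (by positivity), inv_mul_le_iff₀ hδ, ← dist_eq_norm]

lemma cthickening_frontier_subset_image_homothety (hs : Convex ℝ s) (hr : 0 ≤ r)
    (ha : closedBall a r ⊆ s) (hδ : 0 < δ) :
    cthickening (δ * r) (frontier s) ⊆ homothety a (1 + δ) '' closure s := by
  intro z hz
  obtain ⟨x, hx, v, hv, rfl⟩ :=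
    exists_add_smul_eq_of_mem_cthickening isClosed_frontier hr hδ hz
  have hav : a + v ∈ closure s := subset_closure (ha (by simpa using hv))
  refine ⟨(1 + δ)⁻¹ • x + ((1 + δ)⁻¹ * δ) • (a + v),
    hs.closure (frontier_subset_closure hx) hav (by positivity) (by positivity) (by field_simp), ?_⟩
  rw [homothety_apply, vsub_eq_sub, vadd_eq_add]
  match_scalars <;> field_simp
  ring

lemma disjoint_cthickening_frontier_image_homothety (hs : Convex ℝ s) (hr : 0 ≤ r)
    (ha : closedBall a r ⊆ s) (hδ : 0 < δ) (hδ1 : δ < 1) :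
    Disjoint (cthickening (δ * r) (frontier s)) (homothety a (1 - δ) '' interior s) := by
  rw [disjoint_left]
  rintro z hz ⟨y, hy, hyz⟩
  obtain ⟨x, hx, v, hv, rfl⟩ :=
    exists_add_smul_eq_of_mem_cthickening isClosed_frontier hr hδ hz
  have hav : a - v ∈ s := ha (by simpa using hv)
  have hxy : x = (1 - δ) • y + δ • (a - v) := by
    rw [homothety_apply, vsub_eq_sub, vadd_eq_add] at hyz
    rw [eq_sub_of_add_eq hyz.symm]
    module
  refine hx.2 (hxy ▸ ?_)
  exact hs.combo_interior_self_mem_interior hy hav (by linarith) hδ.le (by ring)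

end ProperSpace

lemma exists_ne_zero_forall_apply_eq_of_interior_eq_empty [FiniteDimensional ℝ E]
    (hs : Convex ℝ s) (hint : interior s = ∅) (ha : a ∈ s) :
    ∃ f : E →L[ℝ] ℝ, f ≠ 0 ∧ ∀ x ∈ s, f x = f a := by
  have hspan : vectorSpan ℝ s ≠ ⊤ := by
    rw [← direction_affineSpan, Ne,
      AffineSubspace.direction_eq_top_iff_of_nonempty ⟨a, subset_affineSpan ℝ s ha⟩,
      ← hs.interior_nonempty_iff_affineSpan_eq_top, hint]
    exact not_nonempty_empty
  obtain ⟨f, hf, hker⟩ := (vectorSpan ℝ s).exists_le_ker_of_lt_top hspan.lt_top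
  refine ⟨f.toContinuousLinearMap, by simpa using hf, fun x hx => ?_⟩
  have hxa : f (x - a) = 0 := hker (vsub_mem_vectorSpan ℝ hx ha)
  rwa [map_sub, sub_eq_zero] at hxa

/- The set lies in a hyperplane, so it is contained in the flat face of a half-ball. -/
lemma exists_convex_isBounded_subset_frontier [FiniteDimensional ℝ E] (hs : Convex ℝ s)
    (hb : IsBounded s) (hint : interior s = ∅) :
    ∃ t : Set E, Convex ℝ t ∧ IsBounded t ∧ (interior t).Nonempty ∧ s ⊆ frontier t := by
  obtain rfl | ⟨a, ha⟩ := s.eq_empty_or_nonempty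
  · exact ⟨ball 0 1, convex_ball 0 1, isBounded_ball, by simp [isOpen_ball.interior_eq],
      empty_subset _⟩
  obtain ⟨f, hf, hfs⟩ := exists_ne_zero_forall_apply_eq_of_interior_eq_empty hs hint ha
  obtain ⟨R, hR, hsR⟩ := hb.subset_ball_lt 0 a
  have hinterior : interior ({x | f a ≤ f x} ∩ ball a R) = {x | f a < f x} ∩ ball a R := by
    rw [interior_inter, interior_setOf_le_apply hf, isOpen_ball.interior_eq]
  refine ⟨{x | f a ≤ f x} ∩ ball a R,
    (convex_halfSpace_ge f.toLinearMap.isLinear _).inter (convex_ball a R),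
    isBounded_ball.subset inter_subset_right, ?_, fun x hx => ⟨?_, ?_⟩⟩
  · have haf : a ∈ closure (f ⁻¹' Ioi (f a)) := by
      rw [← (f.isOpenMap_of_ne_zero hf).preimage_closure_eq_closure_preimage f.continuous,
        closure_Ioi]
      exact le_refl (f a)
    rw [hinterior, inter_comm]
    exact mem_closure_iff.1 haf _ isOpen_ball (mem_ball_self hR)
  · exact subset_closure ⟨(hfs x hx).ge, hsR hx⟩
  · rw [hinterior]
    exact fun h => h.1.ne' (hfs x hx)

section Measure

variable [FiniteDimensional ℝ E] [MeasurableSpace E] [BorelSpace E]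
  (μ : Measure E) [μ.IsAddHaarMeasure]

lemma measureReal_image_homothety_of_nonneg {c : ℝ} (hc : 0 ≤ c) (a : E) (s : Set E) :
    μ.real (homothety a c '' s) = c ^ finrank ℝ E * μ.real s := by
  rw [measureReal_def, Measure.addHaar_image_homothety, ENNReal.toReal_mul,
    ENNReal.toReal_ofReal (abs_nonneg _), abs_of_nonneg (by positivity), measureReal_def]

lemma measureReal_smul_of_nonneg {c : ℝ} (hc : 0 ≤ c) (s : Set E) :
    μ.real (c • s) = c ^ finrank ℝ E * μ.real s := by
  rw [measureReal_def, Measure.addHaar_smul_of_nonneg μ hc, ENNReal.toReal_mul,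
    ENNReal.toReal_ofReal (by positivity), measureReal_def]

lemma measureReal_interior_of_convex (hs : Convex ℝ s) : μ.real (interior s) = μ.real s :=
  congrArg ENNReal.toReal (measure_congr (interior_ae_eq_of_null_frontier (hs.addHaar_frontier μ)))

lemma measureReal_closure_of_convex (hs : Convex ℝ s) : μ.real (closure s) = μ.real s :=
  congrArg ENNReal.toReal (measure_congr (closure_ae_eq_of_null_frontier (hs.addHaar_frontier μ)))

lemma measure_image_homothety_ne_top (hμs : μ s ≠ ⊤) (a : E) (c : ℝ) :
    μ (homothety a c '' s) ≠ ⊤ := by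
  rw [Measure.addHaar_image_homothety]
  exact ENNReal.mul_ne_top ENNReal.ofReal_ne_top hμs

lemma measureReal_cthickening_frontier_le (hs : Convex ℝ s) (hb : IsBounded s) {r δ : ℝ}
    (hr : 0 ≤ r) (ha : closedBall a r ⊆ s) (hδ : 0 < δ) :
    μ.real (cthickening (δ * r) (frontier s)) ≤ (1 + δ) ^ finrank ℝ E * μ.real s := by
  rw [← measureReal_closure_of_convex μ hs,
    ← measureReal_image_homothety_of_nonneg μ (by positivity) a]
  exact measureReal_mono (cthickening_frontier_subset_image_homothety hs hr ha hδ)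
    (measure_image_homothety_ne_top μ hb.closure.measure_lt_top.ne a _)

lemma measureReal_cthickening_frontier_add_le (hs : Convex ℝ s) (hb : IsBounded s) {r δ : ℝ}
    (hr : 0 < r) (ha : closedBall a r ⊆ s) (hδ : 0 < δ) (hδ1 : δ < 1) :
    μ.real (cthickening (δ * r) (frontier s)) + (1 - δ) ^ finrank ℝ E * μ.real s ≤
      (1 + δ) ^ finrank ℝ E * μ.real s := by
  have hint : a ∈ interior s :=
    interior_mono ha (ball_subset_interior_closedBall (mem_ball_self hr))
  have houter := cthickening_frontier_subset_image_homothety hs hr.le ha hδ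
  have hinner : homothety a (1 - δ) '' interior s ⊆ homothety a (1 + δ) '' closure s :=
    image_homothety_interior_subset_image_homothety_closure hs hint (by linarith) (by linarith)
      (by linarith)
  have hdisj := disjoint_cthickening_frontier_image_homothety hs hr.le ha hδ hδ1
  have hfin := measure_image_homothety_ne_top μ hb.closure.measure_lt_top.ne a (1 + δ)
  rw [← measureReal_interior_of_convex μ hs,
    ← measureReal_image_homothety_of_nonneg μ (by linarith) a,
    ← measureReal_union' hdisj isClosed_cthickening.measurableSet
      (measure_ne_top_of_subset houter hfin) (measure_ne_top_of_subset hinner hfin),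
    measureReal_interior_of_convex μ hs, ← measureReal_closure_of_convex μ hs,
    ← measureReal_image_homothety_of_nonneg μ (by linarith) a]
  exact measureReal_mono (union_subset houter hinner) hfin

lemma exists_measureReal_cthickening_frontier_le_mul_of_interior_nonempty (hs : Convex ℝ s)
    (hb : IsBounded s) (hint : (interior s).Nonempty) (R : ℝ) :
    ∃ C, ∀ ε, 0 < ε → ε ≤ R → μ.real (cthickening ε (frontier s)) ≤ C * ε := by
  obtain ⟨a, ha⟩ := hint
  obtain ⟨r, hr, har⟩ := nhds_basis_closedBall.mem_iff.1 (mem_interior_iff_mem_nhds.1 ha)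
  let n := finrank ℝ E
  let K := 1 + R / r
  let V := μ.real s
  refine ⟨(2 * n * K ^ (n - 1) + K ^ n) * V / r, fun ε hε hεR => ?_⟩
  obtain ⟨δ, rfl⟩ : ∃ δ, ε = δ * r := ⟨ε / r, by field_simp⟩
  have hδ : 0 < δ := pos_of_mul_pos_left hε hr.le
  have hδK : 1 + δ ≤ K := add_le_add_right ((le_div_iff₀ hr).2 hεR) 1
  have hK : 0 ≤ K := by linarith
  suffices μ.real (cthickening (δ * r) (frontier s)) ≤
      2 * n * K ^ (n - 1) * δ * V + K ^ n * δ * V by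
    convert this using 1
    field_simp
  -- For `δ ≥ 1` no dilate of the interior is avoided, but then `(1 + δ) ^ n` is itself `O(δ)`.
  obtain hδ1 | hδ1 := lt_or_ge δ 1
  · calc μ.real (cthickening (δ * r) (frontier s))
        ≤ ((1 + δ) ^ n - (1 - δ) ^ n) * V := by
          linarith [measureReal_cthickening_frontier_add_le μ hs hb hr har hδ hδ1]
      _ ≤ (2 * δ * n * (1 + δ) ^ (n - 1)) * V := by
          gcongr
          exact one_add_pow_sub_one_sub_pow_le hδ.le hδ1.le n
      _ ≤ (2 * δ * n * K ^ (n - 1)) * V := by gcongr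
      _ = 2 * n * K ^ (n - 1) * δ * V := by ring
      _ ≤ _ := le_add_of_nonneg_right (by positivity)
  · calc μ.real (cthickening (δ * r) (frontier s))
        ≤ (1 + δ) ^ n * V := measureReal_cthickening_frontier_le μ hs hb hr.le har hδ
      _ ≤ K ^ n * V := by gcongr
      _ ≤ K ^ n * δ * V := by
          gcongr
          exact le_mul_of_one_le_right (by positivity) hδ1
      _ ≤ _ := le_add_of_nonneg_left (by positivity)

lemma exists_measureReal_cthickening_frontier_le_mul (hs : Convex ℝ s) (hb : IsBounded s)
    (R : ℝ) : ∃ C, ∀ ε, 0 < ε → ε ≤ R → μ.real (cthickening ε (frontier s)) ≤ C * ε := by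
  obtain hint | hint := (interior s).eq_empty_or_nonempty
  · obtain ⟨t, ht, htb, htint, hst⟩ := exists_convex_isBounded_subset_frontier hs hb hint
    obtain ⟨C, hC⟩ :=
      exists_measureReal_cthickening_frontier_le_mul_of_interior_nonempty μ ht htb htint R
    have hfrontier : frontier s ⊆ frontier t :=
      frontier_subset_closure.trans (closure_minimal hst isClosed_frontier)
    refine ⟨C, fun ε hε hεR => le_trans ?_ (hC ε hε hεR)⟩
    refine measureReal_mono (cthickening_subset_of_subset ε hfrontier) ?_
    exact (IsBounded.subset htb.closure frontier_subset_closure).cthickening.measure_lt_top.ne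
  · exact exists_measureReal_cthickening_frontier_le_mul_of_interior_nonempty μ hs hb hint R

lemma exists_measureReal_cthickening_frontier_smul_le [Nontrivial E] (hs : Convex ℝ s)
    (hb : IsBounded s) {ρ : ℝ} (hρ : 0 < ρ) :
    ∃ C, ∀ t : ℝ, 1 ≤ t →
      μ.real (cthickening ρ (frontier (t • s))) ≤ C * t ^ (finrank ℝ E - 1) := by
  obtain ⟨C, hC⟩ := exists_measureReal_cthickening_frontier_le_mul μ hs hb ρ
  refine ⟨C * ρ, fun t ht => ?_⟩
  have ht0 : 0 < t := by linarith
  calc μ.real (cthickening ρ (frontier (t • s)))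
      = μ.real (t • cthickening (ρ / t) (frontier s)) := by
        rw [← cthickening_smul₀ ht0.ne', frontier_smul₀ ht0.ne', Real.norm_of_nonneg ht0.le,
          mul_div_cancel₀ _ ht0.ne']
    _ = t ^ finrank ℝ E * μ.real (cthickening (ρ / t) (frontier s)) :=
        measureReal_smul_of_nonneg μ ht0.le _
    _ ≤ t ^ finrank ℝ E * (C * (ρ / t)) := by
        gcongr
        exact hC _ (by positivity) (div_le_self hρ.le ht)
    _ = C * ρ * t ^ (finrank ℝ E - 1) := by
        rw [← mul_pow_sub_one (finrank_pos (R := ℝ) (M := E)).ne']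
        field_simp

end Measure

end Thickening

section Cube

open Metric Set Bornology

variable {d : ℕ}

lemma cube_eq_preimage (i : Fin d → ℤ) :
    cube d i = (MeasurableEquiv.toLp 2 (Fin d → ℝ)).symm ⁻¹'
      univ.pi fun j => Ioc ((i j : ℝ) - 1 / 2) ((i j : ℝ) + 1 / 2) := by
  ext u
  simp [cube]

lemma measurableSet_cube (i : Fin d → ℤ) : MeasurableSet (cube d i) := by
  rw [cube_eq_preimage]
  exact MeasurableEquiv.measurable _ (.univ_pi fun _ => measurableSet_Ioc)

lemma volume_cube (i : Fin d → ℤ) : volume (cube d i) = 1 := by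
  rw [cube_eq_preimage,
    (EuclideanSpace.volume_preserving_symm_measurableEquiv_toLp (Fin d)).measure_preimage
      (MeasurableSet.univ_pi fun _ => measurableSet_Ioc).nullMeasurableSet, volume_pi_pi]
  refine Finset.prod_eq_one fun j _ => ?_
  rw [Real.volume_Ioc]
  norm_num

lemma convex_cube (i : Fin d → ℤ) : Convex ℝ (cube d i) := by
  intro x hx y hy a b ha hb hab j
  exact convex_Ioc _ _ (hx j) (hy j) ha hb hab

lemma pairwise_disjoint_cube : Pairwise (Function.onFun Disjoint (cube d)) := by
  intro i i' h
  refine disjoint_left.2 fun u hu hu' => h (funext fun j => ?_)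
  have hlt : (i j : ℝ) < i' j + 1 := by linarith [(hu j).1, (hu' j).2]
  have hlt' : (i' j : ℝ) < i j + 1 := by linarith [(hu j).2, (hu' j).1]
  norm_cast at hlt hlt'
  omega

lemma dist_le_sqrt_of_mem_cube {i : Fin d → ℤ} {x y : EuclideanSpace ℝ (Fin d)}
    (hx : x ∈ cube d i) (hy : y ∈ cube d i) : dist x y ≤ √d := by
  rw [EuclideanSpace.dist_eq]
  refine Real.sqrt_le_sqrt ?_
  calc ∑ j, dist (x j) (y j) ^ 2 ≤ ∑ _ : Fin d, (1 : ℝ) := by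
        refine Finset.sum_le_sum fun j _ => pow_le_one₀ dist_nonneg ?_
        rw [Real.dist_eq, abs_le]
        constructor <;> linarith [(hx j).1, (hx j).2, (hy j).1, (hy j).2]
    _ = d := by simp

lemma volume_biUnion_cube (S : Set (Fin d → ℤ)) : volume (⋃ i ∈ S, cube d i) = S.encard := by
  rw [measure_biUnion S.to_countable (pairwise_disjoint_cube.set_pairwise S)
    fun i _ => measurableSet_cube i]
  simp only [volume_cube, ENNReal.tsum_set_one]

lemma WnBd_subset_cthickening_frontier (W : Set (EuclideanSpace ℝ (Fin d))) :
    WnBd d W ⊆ cthickening √d (frontier W) := by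
  refine iUnion₂_subset fun i hi z hz => ?_
  obtain ⟨p, hpi, hpW⟩ :=
    inter_frontier_nonempty_of_isPreconnected (convex_cube i).isPreconnected hi.2 hi.1
  exact mem_cthickening_of_dist_le z p _ _ hpW (dist_le_sqrt_of_mem_cube hz hpi)

lemma encard_latticeBd_le (W : Set (EuclideanSpace ℝ (Fin d))) :
    ((latticeBd d W).encard : ENNReal) ≤ volume (cthickening √d (frontier W)) := by
  rw [← volume_biUnion_cube]
  exact measure_mono (WnBd_subset_cthickening_frontier W)

lemma volume_cthickening_frontier_ne_top {W : Set (EuclideanSpace ℝ (Fin d))} (hW : IsBounded W) :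
    volume (cthickening √d (frontier W)) ≠ ⊤ :=
  (IsBounded.subset hW.closure frontier_subset_closure).cthickening.measure_lt_top.ne

lemma finite_latticeBd {W : Set (EuclideanSpace ℝ (Fin d))} (hW : IsBounded W) :
    (latticeBd d W).Finite := by
  rw [← encard_ne_top_iff, ← ENat.toENNReal_ne_top]
  exact ne_top_of_le_ne_top (volume_cthickening_frontier_ne_top hW) (encard_latticeBd_le W)

lemma ncard_latticeBd_le {W : Set (EuclideanSpace ℝ (Fin d))} (hW : IsBounded W) :
    ((latticeBd d W).ncard : ℝ) ≤ volume.real (cthickening √d (frontier W)) := by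
  have hle := ENNReal.toReal_mono (volume_cthickening_frontier_ne_top hW) (encard_latticeBd_le W)
  rwa [← (finite_latticeBd hW).cast_ncard_eq, ENat.toENNReal_coe, ENNReal.toReal_natCast] at hle

end Cube

theorem statement9_general (d : ℕ) (hd : 1 ≤ d) (A : Set (EuclideanSpace ℝ (Fin d)))
    (hconv : Convex ℝ A) (hbdd : Bornology.IsBounded A) :
    ∃ C : ℝ, 0 < C ∧ ∀ t : ℝ, 1 ≤ t → (latticeBd d (t • A)).Finite ∧
      ((latticeBd d (t • A)).ncard : ℝ) ≤ C * t ^ (d - 1) := by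
  have : Nonempty (Fin d) := ⟨⟨0, hd⟩⟩
  obtain ⟨C, hC⟩ := exists_measureReal_cthickening_frontier_smul_le volume hconv hbdd
    (Real.sqrt_pos.2 (Nat.cast_pos.2 hd))
  rw [finrank_euclideanSpace_fin] at hC
  refine ⟨max C 1, by positivity, fun t ht => ⟨finite_latticeBd (hbdd.smul₀ t), ?_⟩⟩
  calc ((latticeBd d (t • A)).ncard : ℝ)
      ≤ volume.real (Metric.cthickening √d (frontier (t • A))) :=
        ncard_latticeBd_le (hbdd.smul₀ t)
    _ ≤ C * t ^ (d - 1) := hC t ht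
    _ ≤ max C 1 * t ^ (d - 1) := by
        gcongr
        exact le_max_left C 1

theorem statement9 (d : ℕ) (hd : 1 ≤ d) (A : Set (EuclideanSpace ℝ (Fin d)))
    (hconv : Convex ℝ A) (hcomp : IsCompact A)
    (h0 : (0 : EuclideanSpace ℝ (Fin d)) ∈ interior A) :
    ∃ C : ℝ, 0 < C ∧ ∀ n : ℕ, 1 ≤ n →
      ((latticeBd d ((n : ℝ) • A)).ncard : ℝ) ≤ C * (n : ℝ) ^ (d - 1) := by
  obtain ⟨C, hC0, hC⟩ := statement9_general d hd A hconv hcomp.isBounded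
  exact ⟨C, hC0, fun n hn => (hC n (Nat.one_le_cast.2 hn)).2⟩
end

section
/- Let d ≥ 1, let A ⊂ ℝ^d be convex and compact with the origin in its interior, W_n = nA, and let α ∈ [0,1) and ε_n = n^α. Then there exists a constant C > 0 such that for all sufficiently large n, the Lebesgue measure of the eroded annulus satisfies |W_n^⋆ \ (W_n^⋆)⊖(2ε_n)| ≤ C n^{d−1+α}. -/
open MeasureTheory Pointwise

/-- The erosion `W⊖ε = {u ∈ W : b(u,ε) ⊆ W}` of a set by the closed ball of radius `ε`. -/
def erode {E : Type*} [PseudoMetricSpace E] (W : Set E) (ε : ℝ) : Set E :=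
  {u ∈ W | Metric.closedBall u ε ⊆ W}

/-!
Replacing `W_n` by `W_n^⋆` only costs an erosion by the diameter `√d` of a unit cube, so it suffices
to bound the annulus `W \ W⊖δ` of a convex set `W` containing a ball `b(x, R)`. By convexity `W⊖δ`
contains the copy of `W` shrunk towards `x` by the factor `1 - δ/R`, and Bernoulli's inequality
`1 - (1 - δ/R)^d ≤ d δ/R` bounds the volume that is left (when `δ > R`, this bound exceeds the
volume of `W` itself). The set `nA` contains a ball of radius proportional to `n`, which turns this
into a bound of order `δ n^(d-1)`, unless `A` has empty interior, and then `nA` is a null set.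
-/

section Erode

variable {E : Type*} [PseudoMetricSpace E] {V W : Set E} {a b ε : ℝ} {u : E}

lemma mem_erode_iff (hε : 0 ≤ ε) : u ∈ erode W ε ↔ Metric.closedBall u ε ⊆ W :=
  ⟨And.right, fun h => ⟨h (Metric.mem_closedBall_self hε), h⟩⟩

lemma erode_mono (h : V ⊆ W) (ε : ℝ) : erode V ε ⊆ erode W ε :=
  fun _ hu => ⟨h hu.1, hu.2.trans h⟩

lemma erode_add_subset_erode_erode (ha : 0 ≤ a) (hb : 0 ≤ b) (W : Set E) :
    erode W (a + b) ⊆ erode (erode W a) b := by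
  intro u hu
  refine (mem_erode_iff hb).2 fun v hv => (mem_erode_iff ha).2 ?_
  refine (Metric.closedBall_subset_closedBall' ?_).trans hu.2
  gcongr
  exact hv

end Erode

section Cube

variable {d : ℕ} {i : Fin d → ℤ} {v w : EuclideanSpace ℝ (Fin d)}

lemma exists_mem_cube (v : EuclideanSpace ℝ (Fin d)) : ∃ i, v ∈ cube d i := by
  refine ⟨fun j => ⌈v j - 1 / 2⌉, fun j => ⟨?_, ?_⟩⟩
  · linarith [Int.ceil_lt_add_one (v j - 1 / 2)]
  · linarith [Int.le_ceil (v j - 1 / 2)]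

lemma dist_le_sqrt_of_mem_cube_s12 (hv : v ∈ cube d i) (hw : w ∈ cube d i) : dist v w ≤ √d := by
  have coord_dist_le (j : Fin d) : dist (v j) (w j) ≤ 1 := by
    have h := Real.dist_le_of_mem_Icc (Set.Ioc_subset_Icc_self (hv j))
      (Set.Ioc_subset_Icc_self (hw j))
    linarith
  rw [EuclideanSpace.dist_eq]
  refine Real.sqrt_le_sqrt ?_
  calc ∑ j, dist (v j) (w j) ^ 2 ≤ ∑ _j : Fin d, (1 : ℝ) :=
        Finset.sum_le_sum fun j _ => pow_le_one₀ dist_nonneg (coord_dist_le j)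
    _ = d := by simp

variable (W : Set (EuclideanSpace ℝ (Fin d)))

lemma WnStar_subset : WnStar d W ⊆ W :=
  Set.iUnion₂_subset fun _ hi => hi

lemma erode_sqrt_subset_WnStar : erode W √d ⊆ WnStar d W := by
  intro v hv
  obtain ⟨i, hi⟩ := exists_mem_cube v
  have hiW : cube d i ⊆ W := fun w hw => hv.2 (dist_le_sqrt_of_mem_cube_s12 hw hi)
  exact Set.mem_biUnion hiW hi

lemma WnStar_sdiff_erode_subset {ε : ℝ} (hε : 0 ≤ ε) :
    WnStar d W \ erode (WnStar d W) ε ⊆ W \ erode W (√d + ε) :=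
  Set.sdiff_subset_sdiff (WnStar_subset W) <|
    (erode_add_subset_erode_erode (Real.sqrt_nonneg d) hε W).trans <|
      erode_mono (erode_sqrt_subset_WnStar W) ε

end Cube

section Convex

variable {E : Type*} [NormedAddCommGroup E] [NormedSpace ℝ E] {A K : Set E} {x : E} {r t δ : ℝ}

lemma homothety_image_subset_erode (hK : Convex ℝ K) (hr : 0 ≤ r)
    (hball : Metric.closedBall x r ⊆ K) (ht₀ : 0 ≤ t) (ht₁ : t ≤ 1) :
    AffineMap.homothety x (1 - t) '' K ⊆ erode K (t * r) := by
  rintro _ ⟨v, hv, rfl⟩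
  refine (mem_erode_iff (by positivity)).2 fun w hw => ?_
  have hw' : w - (1 - t) • v ∈ t • Metric.closedBall x r := by
    rw [smul_closedBall t x hr, Real.norm_of_nonneg ht₀, mem_closedBall_iff_norm]
    convert mem_closedBall_iff_norm.1 hw using 2
    simp only [AffineMap.homothety_apply, vsub_eq_sub, vadd_eq_add]
    module
  obtain ⟨y, hy, hyw⟩ := Set.mem_smul_set.1 hw'
  have hw_eq : (1 - t) • v + t • y = w := by rw [hyw, add_sub_cancel]
  exact hw_eq ▸ hK hv (hball hy) (by linarith) ht₀ (by ring)

variable [FiniteDimensional ℝ E] [MeasurableSpace E] [BorelSpace E]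
  (μ : Measure E) [μ.IsAddHaarMeasure]

open Module (finrank)

lemma addHaar_sdiff_homothety_le (hK : Convex ℝ K) (hKμ : μ K ≠ ⊤) (hx : x ∈ K)
    (ht₀ : 0 ≤ t) (ht₁ : t ≤ 1) :
    μ (K \ AffineMap.homothety x (1 - t) '' K) ≤ ENNReal.ofReal (finrank ℝ E * t) * μ K := by
  set L := AffineMap.homothety x (1 - t) '' K with hL
  have hLK : L ⊆ K := by
    rintro _ ⟨v, hv, rfl⟩
    rw [AffineMap.homothety_eq_lineMap]
    exact hK.lineMap_mem hx hv ⟨by linarith, by linarith⟩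
  have hLμ : μ L = ENNReal.ofReal ((1 - t) ^ finrank ℝ E) * μ K := by
    rw [hL, Measure.addHaar_image_homothety, abs_of_nonneg (pow_nonneg (by linarith) _)]
  have bernoulli : 1 ≤ finrank ℝ E * t + (1 - t) ^ finrank ℝ E := by
    have := one_add_mul_le_pow (a := -t) (by linarith) (finrank ℝ E)
    rw [← sub_eq_add_neg] at this
    linarith
  rw [measure_sdiff hLK ((hK.affine_image _).nullMeasurableSet μ)
      (measure_ne_top_of_subset hLK hKμ), tsub_le_iff_right, hLμ, ← add_mul,
    ← ENNReal.ofReal_add (by positivity) (pow_nonneg (by linarith) _)]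
  exact le_mul_of_one_le_left' (ENNReal.one_le_ofReal.2 bernoulli)

variable [Nontrivial E]

lemma addHaar_sdiff_erode_le (hK : Convex ℝ K) (hKμ : μ K ≠ ⊤) (hr : 0 < r)
    (hball : Metric.closedBall x r ⊆ K) (hδ : 0 ≤ δ) :
    μ (K \ erode K δ) ≤ ENNReal.ofReal (finrank ℝ E * (δ / r)) * μ K := by
  rcases le_total (δ / r) 1 with hδr | hδr
  · have hsub := homothety_image_subset_erode hK hr.le hball (by positivity) hδr
    rw [div_mul_cancel₀ δ hr.ne'] at hsub
    exact (measure_mono (Set.sdiff_subset_sdiff_right hsub)).trans <|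
      addHaar_sdiff_homothety_le μ hK hKμ (hball (Metric.mem_closedBall_self hr.le))
        (by positivity) hδr
  · have hdim : (1 : ℝ) ≤ finrank ℝ E := by exact_mod_cast Module.finrank_pos (R := ℝ) (M := E)
    exact (measure_mono Set.sdiff_subset).trans <|
      le_mul_of_one_le_left' (ENNReal.one_le_ofReal.2 (one_le_mul_of_one_le_of_one_le hdim hδr))

lemma exists_addHaar_smul_sdiff_erode_le (hA : Convex ℝ A) (hAμ : μ A ≠ ⊤) :
    ∃ c : ℝ, 0 ≤ c ∧ ∀ s δ : ℝ, 0 < s → 0 ≤ δ →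
      μ (s • A \ erode (s • A) δ) ≤ ENNReal.ofReal (c * δ * s ^ (finrank ℝ E - 1)) := by
  rcases (interior A).eq_empty_or_nonempty with hint | ⟨x, hx⟩
  · have hA_frontier : A ⊆ frontier A := by
      rw [frontier, hint, Set.sdiff_empty]
      exact subset_closure
    have hA₀ : μ A = 0 := measure_mono_null hA_frontier (hA.addHaar_frontier μ)
    refine ⟨0, le_rfl, fun s δ _ _ => ?_⟩
    have hsA₀ : μ (s • A) = 0 := by rw [Measure.addHaar_smul, hA₀, mul_zero]
    exact (measure_mono_null Set.sdiff_subset hsA₀).trans_le zero_le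
  · obtain ⟨r, hr, hball⟩ := Metric.nhds_basis_closedBall.mem_iff.1 (mem_interior_iff_mem_nhds.1 hx)
    refine ⟨finrank ℝ E / r * (μ A).toReal, by positivity, fun s δ hs hδ => ?_⟩
    have hsA : μ (s • A) = ENNReal.ofReal (s ^ finrank ℝ E * (μ A).toReal) := by
      rw [Measure.addHaar_smul_of_nonneg μ hs.le, ENNReal.ofReal_mul (by positivity),
        ENNReal.ofReal_toReal hAμ]
    have hball_smul : Metric.closedBall (s • x) (s * r) ⊆ s • A := by
      have hsmul := smul_closedBall s x hr.le
      rw [Real.norm_of_nonneg hs.le] at hsmul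
      exact hsmul ▸ Set.smul_set_mono hball
    calc μ (s • A \ erode (s • A) δ)
        ≤ ENNReal.ofReal (finrank ℝ E * (δ / (s * r))) * μ (s • A) :=
          addHaar_sdiff_erode_le μ (hA.smul s) (hsA ▸ ENNReal.ofReal_ne_top) (by positivity)
            hball_smul hδ
      _ = ENNReal.ofReal (finrank ℝ E / r * (μ A).toReal * δ * s ^ (finrank ℝ E - 1)) := by
          rw [hsA, ← ENNReal.ofReal_mul (by positivity),
            ← pow_sub_one_mul (Module.finrank_pos (R := ℝ) (M := E)).ne' s]
          congr 1
          field_simp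

end Convex

theorem statement12_general (d : ℕ) (hd : 1 ≤ d) (A : Set (EuclideanSpace ℝ (Fin d)))
    (hconv : Convex ℝ A) (hfin : volume A ≠ ⊤) (α : ℝ) (hα : 0 ≤ α) :
    ∃ C : ℝ, 0 < C ∧ ∀ s : ℝ, 1 ≤ s →
      volume (WnStar d (s • A) \ erode (WnStar d (s • A)) (2 * s ^ α)) ≤
        ENNReal.ofReal (C * s ^ ((d : ℝ) - 1 + α)) := by
  have : Nonempty (Fin d) := ⟨⟨0, hd⟩⟩
  obtain ⟨c, hc, hvol⟩ := exists_addHaar_smul_sdiff_erode_le volume hconv hfin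
  rw [finrank_euclideanSpace_fin] at hvol
  refine ⟨c * (√d + 2) + 1, by positivity, fun s hs => ?_⟩
  have hs₀ : 0 < s := by linarith
  have hsα : 1 ≤ s ^ α := Real.one_le_rpow hs hα
  have hpow : s ^ ((d : ℝ) - 1 + α) = s ^ α * s ^ (d - 1) := by
    rw [Real.rpow_add hs₀, mul_comm, ← Real.rpow_natCast, Nat.cast_pred hd]
  have hcoeff : c * (√d + 2 * s ^ α) ≤ (c * (√d + 2) + 1) * s ^ α := by
    have : c * √d ≤ c * √d * s ^ α := le_mul_of_one_le_right (by positivity) hsα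
    linarith
  calc volume (WnStar d (s • A) \ erode (WnStar d (s • A)) (2 * s ^ α))
      ≤ volume (s • A \ erode (s • A) (√d + 2 * s ^ α)) :=
        measure_mono (WnStar_sdiff_erode_subset _ (by positivity))
    _ ≤ ENNReal.ofReal (c * (√d + 2 * s ^ α) * s ^ (d - 1)) :=
        hvol s _ hs₀ (by positivity)
    _ ≤ ENNReal.ofReal ((c * (√d + 2) + 1) * s ^ ((d : ℝ) - 1 + α)) := by
        rw [hpow, ← mul_assoc]
        gcongr ENNReal.ofReal (?_ * _)

theorem statement12 (d : ℕ) (hd : 1 ≤ d) (A : Set (EuclideanSpace ℝ (Fin d)))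
    (hconv : Convex ℝ A) (hcomp : IsCompact A)
    (h0 : (0 : EuclideanSpace ℝ (Fin d)) ∈ interior A)
    (α : ℝ) (hα0 : 0 ≤ α) (hα1 : α < 1) :
    ∃ C : ℝ, 0 < C ∧ ∃ N : ℕ, ∀ n : ℕ, N ≤ n →
      volume (WnStar d ((n : ℝ) • A) \
          erode (WnStar d ((n : ℝ) • A)) (2 * (n : ℝ) ^ α)) ≤
        ENNReal.ofReal (C * (n : ℝ) ^ ((d : ℝ) - 1 + α)) := by
  obtain ⟨C, hC, hvol⟩ := statement12_general d hd A hconv hcomp.measure_ne_top α hα0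
  exact ⟨C, hC, 1, fun n hn => hvol n (by exact_mod_cast hn)⟩
end
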